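/- arXiv:2006.16871 — 2 statements merged into one kernel-verified Lean document; each statement's English description precedes it below -/
import Mathlib

section
/- There exists a Hilbert space H of holomorphic functions on the unit disk 𝔻, continuously embedded in Hol(𝔻), such that H contains all polynomials, the polynomials are dense in H, but the odd polynomials are not dense in the subspace of odd functions of H. Moreover, given any positive sequence (ω_n) with Σ 1/ω_n < ∞, H can be chosen so that ‖z^n‖_H ≤ 1 + ω_n for all n ≥ 0. -/
open Metric

namespace OddPoly

/-- The underlying Hilbert space. -/
abbrev HS : Type := lp (fun _ : ℕ => ℂ) 2

/-- Standard basis vectors. -/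
noncomputable def E (i : ℕ) : HS := lp.single 2 i (1 : ℂ)

lemma E_apply (i j : ℕ) : (E i) j = if j = i then (1 : ℂ) else 0 := by
  simp [E, Pi.single_apply]

lemma E_norm (i : ℕ) : ‖E i‖ = 1 := by
  simp [E, lp.norm_single]

lemma E_inner (i : ℕ) (x : HS) : inner ℂ (E i) x = x i := by
  simp [E, lp.inner_single_left]

/-- The (unscaled) monomial vectors. -/
noncomputable def v (n : ℕ) : HS :=
  if Even n then E (n + 1) + E 0 - ∑ k ∈ (Finset.range n).filter Odd, E (k + 1) else E (n + 1)

/-- The (unscaled) coefficient functionals. -/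
noncomputable def c (n : ℕ) (x : HS) : ℂ :=
  if Even n then x (n + 1)
  else x (n + 1) + x 0 - ∑ j ∈ (Finset.range (n + 1)).filter Even, x (j + 1)

lemma c_add (n : ℕ) (x y : HS) : c n (x + y) = c n x + c n y := by
  unfold c
  split_ifs
  · simp
  · simp [Finset.sum_add_distrib]; ring

lemma c_smul (n : ℕ) (a : ℂ) (x : HS) : c n (a • x) = a * c n x := by
  unfold c
  split_ifs
  · simp
  · simp [← Finset.mul_sum]; ring

lemma c_bound (n : ℕ) (x : HS) : ‖c n x‖ ≤ (n + 3) * ‖x‖ := by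
  have hx : ∀ i, ‖x i‖ ≤ ‖x‖ := fun i => lp.norm_apply_le_norm (by norm_num) x i
  have h0 := norm_nonneg x
  unfold c
  split_ifs
  · nlinarith [hx (n + 1), mul_nonneg (Nat.cast_nonneg (α := ℝ) n) h0]
  · have h1 : ‖∑ j ∈ (Finset.range (n + 1)).filter Even, x (j + 1)‖ ≤ (n + 1) * ‖x‖ := by
      refine (norm_sum_le_of_le _ fun j _ => hx (j + 1)).trans ?_
      rw [Finset.sum_const, nsmul_eq_mul]
      refine mul_le_mul_of_nonneg_right ?_ h0
      have := Finset.card_filter_le (Finset.range (n + 1)) Even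
      rw [Finset.card_range] at this
      exact_mod_cast this
    have h2 := norm_sub_le (x (n + 1) + x 0) (∑ j ∈ (Finset.range (n + 1)).filter Even, x (j + 1))
    have h3 := norm_add_le (x (n + 1)) (x 0)
    nlinarith [hx (n + 1), hx 0]

lemma v_norm (n : ℕ) : ‖v n‖ ≤ n + 2 := by
  unfold v
  split_ifs
  · have h1 : ‖∑ k ∈ (Finset.range n).filter Odd, E (k + 1)‖ ≤ n := by
      refine (norm_sum_le_of_le _ fun j _ => (E_norm (j + 1)).le).trans ?_
      rw [Finset.sum_const, nsmul_eq_mul, mul_one]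
      have := Finset.card_filter_le (Finset.range n) Odd
      rw [Finset.card_range] at this
      exact_mod_cast this
    have h2 := norm_sub_le (E (n + 1) + E 0) (∑ k ∈ (Finset.range n).filter Odd, E (k + 1))
    have h3 := norm_add_le (E (n + 1)) (E 0)
    rw [E_norm, E_norm] at h3
    linarith
  · rw [E_norm]; linarith [Nat.cast_nonneg (α := ℝ) n]

lemma sumE_apply (s : Finset ℕ) (i : ℕ) :
    (∑ k ∈ s, E (k + 1) : HS) i = ∑ k ∈ s, if i = k + 1 then (1 : ℂ) else 0 := by
  rw [lp.coeFn_sum, Finset.sum_apply]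
  exact Finset.sum_congr rfl fun k _ => E_apply _ _

lemma v_zero (n : ℕ) : (v n) 0 = if Even n then (1 : ℂ) else 0 := by
  unfold v
  split_ifs
  · rw [lp.coeFn_sub, Pi.sub_apply, sumE_apply]
    simp [E_apply]
  · simp [E_apply]

lemma v_succ (n k : ℕ) : (v n) (k + 1) =
    (if k = n then (1 : ℂ) else 0) - if Even n ∧ k < n ∧ Odd k then 1 else 0 := by
  unfold v
  by_cases h1 : Even n
  · rw [if_pos h1, lp.coeFn_sub, Pi.sub_apply, sumE_apply]
    simp [E_apply, h1]
  · simp [E_apply, h1]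

lemma c_v (m n : ℕ) : c m (v n) = if m = n then (1 : ℂ) else 0 := by
  unfold c
  split_ifs with h1 h2 h2
  · subst h2; simp [v_succ]
  · simp [v_succ, h2]; intro _ _; exact h1
  · subst h2
    have : ∀ j ∈ (Finset.range (m + 1)).filter Even, (v m) (j + 1) = 0 := by
      intro j hj
      rw [Finset.mem_filter] at hj
      have : j ≠ m := by rintro rfl; exact h1 hj.2
      simp [v_succ, this, h1]
    rw [Finset.sum_eq_zero this]
    simp [v_succ, v_zero, h1]
  · have : ∀ j ∈ (Finset.range (m + 1)).filter Even, (v n) (j + 1) = if j = n then 1 else 0 := by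
      intro j hj
      rw [Finset.mem_filter] at hj
      have : ¬ Odd j := Nat.not_odd_iff_even.mpr hj.2
      simp [v_succ, this]
    rw [Finset.sum_congr rfl this, Finset.sum_ite_eq', v_succ, v_zero]
    have h3 : Odd m := Nat.not_even_iff_odd.mp h1
    by_cases h4 : Even n
    · rcases lt_or_gt_of_ne h2 with h5 | h5
      · have : ¬ n < m + 1 := by omega
        simp [h2, h3, h4, h5, this]
      · have : n < m + 1 := by omega
        have h6 : ¬ m < n := by omega
        simp [h2, h4, h6, this]
    · simp [h2, h4]

lemma c_total (x : HS) (h : ∀ n, c n x = 0) : x = 0 := by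
  have he : ∀ n, Even n → x (n + 1) = 0 := by
    intro n hn; have := h n; rwa [c, if_pos hn] at this
  have ho : ∀ n, ¬ Even n → x (n + 1) = - x 0 := by
    intro n hn; have := h n
    rw [c, if_neg hn, Finset.sum_eq_zero] at this
    · linear_combination this
    · intro j hj; exact he j (Finset.mem_filter.mp hj).2
  have hs := (lp.memℓp x).summable (by norm_num)
  have ht := hs.tendsto_atTop_zero
  have h2 : Filter.Tendsto (fun n : ℕ => 2 * n + 1 + 1) Filter.atTop Filter.atTop :=
    Filter.tendsto_atTop_mono (fun n => by simp only [id]; omega) Filter.tendsto_id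
  have h3 := ht.comp h2
  have h0 : x 0 = 0 := by
    have : (fun i : ℕ => ‖x i‖ ^ (2 : ENNReal).toReal) ∘ (fun n : ℕ => 2 * n + 1 + 1)
        = fun _ => ‖x 0‖ ^ (2 : ENNReal).toReal := by
      ext n
      have hn : ¬ Even (2 * n + 1) := by simp
      simp [ho _ hn]
    rw [this] at h3
    have := tendsto_nhds_unique h3 tendsto_const_nhds
    simpa using this.symm
  ext i
  cases i with
  | zero => simpa using h0
  | succ n =>
    by_cases hn : Even n
    · simpa using he n hn
    · simpa [h0] using ho n hn

lemma v_total (x : HS) (h : ∀ n, inner ℂ (v n) x = 0) : x = 0 := by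
  have ho : ∀ n, ¬ Even n → x (n + 1) = 0 := by
    intro n hn; have := h n; rwa [v, if_neg hn, E_inner] at this
  have he : ∀ n, Even n → x (n + 1) = - x 0 := by
    intro n hn; have := h n
    rw [v, if_pos hn, inner_sub_left, inner_add_left, E_inner, E_inner, sum_inner,
      Finset.sum_eq_zero] at this
    · linear_combination this
    · intro j hj
      rw [E_inner]
      exact ho j (Nat.not_even_iff_odd.mpr (Finset.mem_filter.mp hj).2)
  have hs := (lp.memℓp x).summable (by norm_num)
  have ht := hs.tendsto_atTop_zero
  have h2 : Filter.Tendsto (fun n : ℕ => 2 * n + 1) Filter.atTop Filter.atTop :=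
    Filter.tendsto_atTop_mono (fun n => by simp only [id]; omega) Filter.tendsto_id
  have h3 := ht.comp h2
  have h0 : x 0 = 0 := by
    have : (fun i : ℕ => ‖x i‖ ^ (2 : ENNReal).toReal) ∘ (fun n : ℕ => 2 * n + 1)
        = fun _ => ‖x 0‖ ^ (2 : ENNReal).toReal := by
      ext n
      have hn : Even (2 * n) := by simp
      simp [he _ hn]
    rw [this] at h3
    have := tendsto_nhds_unique h3 tendsto_const_nhds
    simpa using this.symm
  ext i
  cases i with
  | zero => simpa using h0
  | succ n =>
    by_cases hn : Even n
    · simpa [h0] using he n hn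
    · simpa using ho n hn

/-- Scaled coefficients. -/
noncomputable def a (x : HS) (n : ℕ) : ℂ := (n + 2) * c n x

lemma a_bound (x : HS) (n : ℕ) : ‖a x n‖ ≤ ((n + 2) * (n + 3)) * ‖x‖ := by
  unfold a
  rw [norm_mul]
  have h1 : ‖((n : ℂ) + 2)‖ = n + 2 := by
    rw [show ((n : ℂ) + 2) = ((n + 2 : ℕ) : ℂ) by push_cast; ring, Complex.norm_natCast]
    push_cast; ring
  rw [h1, mul_assoc]
  exact mul_le_mul_of_nonneg_left (c_bound n x) (by positivity)

lemma geo_summable {r : ℝ} (h0 : 0 ≤ r) (hr : r < 1) :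
    Summable fun n : ℕ => (((n : ℝ) + 2) * (n + 3)) * r ^ n := by
  have hr' : ‖r‖ < 1 := by rwa [Real.norm_of_nonneg h0]
  have h := ((summable_pow_mul_geometric_of_norm_lt_one 2 hr').add
    ((summable_pow_mul_geometric_of_norm_lt_one 1 hr').mul_left 5)).add
    ((summable_pow_mul_geometric_of_norm_lt_one 0 hr').mul_left 6)
  refine h.congr fun n => ?_
  ring

lemma term_bound (x : HS) {r : ℝ} {z : ℂ} (hz : ‖z‖ ≤ r) (n : ℕ) :
    ‖a x n * z ^ n‖ ≤ ‖x‖ * ((((n : ℝ) + 2) * (n + 3)) * r ^ n) := by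
  rw [norm_mul, norm_pow]
  calc ‖a x n‖ * ‖z‖ ^ n ≤ (((n + 2) * (n + 3)) * ‖x‖) * r ^ n := by
        gcongr
        exact a_bound x n
    _ = _ := by ring

lemma a_summable (x : HS) {z : ℂ} (hz : ‖z‖ < 1) : Summable fun n => a x n * z ^ n :=
  Summable.of_norm_bounded ((geo_summable (norm_nonneg z) hz).mul_left ‖x‖)
    (term_bound x le_rfl)

open Classical in
/-- The embedding. -/
noncomputable def emb : HS →ₗ[ℂ] (ℂ → ℂ) where
  toFun x z := if ‖z‖ < 1 then ∑' n, a x n * z ^ n else 0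
  map_add' x y := by
    ext z
    simp only [Pi.add_apply]
    split_ifs with hz
    · rw [← (a_summable x hz).tsum_add (a_summable y hz)]
      refine tsum_congr fun n => ?_
      simp only [a, c_add]; ring
    · simp
  map_smul' t x := by
    ext z
    simp only [Pi.smul_apply, RingHom.id_apply, smul_eq_mul]
    split_ifs with hz
    · rw [← tsum_mul_left]
      refine tsum_congr fun n => ?_
      simp only [a, c_smul]; ring
    · simp

lemma emb_apply (x : HS) {z : ℂ} (hz : ‖z‖ < 1) : emb x z = ∑' n, a x n * z ^ n := by
  simp [emb, hz]

lemma emb_series (x : HS) :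
    HasFPowerSeriesOnBall (emb x) (FormalMultilinearSeries.ofScalars ℂ (a x)) 0 1 := by
  have hrad : 1 ≤ (FormalMultilinearSeries.ofScalars ℂ (a x)).radius := by
    refine ENNReal.le_of_forall_nnreal_lt fun r hr => ?_
    have hr1 : (r : ℝ) < 1 := by exact_mod_cast hr
    refine FormalMultilinearSeries.le_radius_of_summable _ ?_
    have h := (geo_summable r.2 hr1).mul_left ‖x‖
    refine Summable.of_nonneg_of_le (fun n => by positivity) (fun n => ?_) h
    have := term_bound x (r := r) (z := ((r : ℝ) : ℂ)) (by simp) n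
    simpa using this
  refine ⟨hrad, one_pos, fun {y} hy => ?_⟩
  have hy' : ‖y‖ < 1 := by simpa [Metric.mem_eball, edist_zero_right, ← ofReal_norm, ENNReal.ofReal_lt_one] using hy
  rw [zero_add, emb_apply x hy', FormalMultilinearSeries.ofScalars_apply_eq']
  exact (a_summable x hy').hasSum

lemma emb_inj (x y : HS) (h : ∀ z ∈ ball (0 : ℂ) 1, emb x z = emb y z) : x = y := by
  have h1 : ∀ᶠ z in nhds (0 : ℂ), emb x z = emb y z :=
    Filter.eventually_of_mem (ball_mem_nhds 0 one_pos) h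
  have h2 := (emb_series x).hasFPowerSeriesAt.eq_formalMultilinearSeries_of_eventually
    (emb_series y).hasFPowerSeriesAt h1
  rw [FormalMultilinearSeries.ofScalars_series_eq_iff] at h2
  rw [← sub_eq_zero]
  refine c_total _ fun n => ?_
  have h3 : (n : ℂ) + 2 ≠ 0 := by
    rw [show ((n : ℂ) + 2) = ((n + 2 : ℕ) : ℂ) by push_cast; ring]
    exact Nat.cast_ne_zero.mpr (by omega)
  have h4 := congrFun h2 n
  unfold a at h4
  have h5 := mul_left_cancel₀ h3 h4
  rw [sub_eq_add_neg, c_add, show -y = (-1 : ℂ) • y by simp, c_smul, h5]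
  ring

/-- The vector representing the monomial. -/
noncomputable def mono (n : ℕ) : HS := ((n : ℂ) + 2)⁻¹ • v n

lemma emb_mono (n : ℕ) {z : ℂ} (hz : ‖z‖ < 1) : emb (mono n) z = z ^ n := by
  have h3 : (n : ℂ) + 2 ≠ 0 := by
    rw [show ((n : ℂ) + 2) = ((n + 2 : ℕ) : ℂ) by push_cast; ring]
    exact Nat.cast_ne_zero.mpr (by omega)
  rw [emb_apply _ hz, tsum_eq_single n]
  · simp [a, mono, c_smul, c_v, h3]
  · intro m hm
    simp [a, mono, c_smul, c_v, hm]

lemma mono_norm (n : ℕ) : ‖mono n‖ ≤ 1 := by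
  have h1 : ‖((n : ℂ) + 2)‖ = n + 2 := by
    rw [show ((n : ℂ) + 2) = ((n + 2 : ℕ) : ℂ) by push_cast; ring, Complex.norm_natCast]
    push_cast; ring
  rw [mono, norm_smul, norm_inv, h1, inv_mul_le_iff₀ (by positivity), mul_one]
  exact v_norm n

/-- The vector representing a polynomial. -/
noncomputable def polyVec (p : Polynomial ℂ) : HS := ∑ n ∈ p.support, p.coeff n • mono n

lemma emb_polyVec (p : Polynomial ℂ) {z : ℂ} (hz : ‖z‖ < 1) : emb (polyVec p) z = p.eval z := by
  rw [polyVec, map_sum, Finset.sum_apply, Polynomial.eval_eq_sum, Polynomial.sum]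
  refine Finset.sum_congr rfl fun n _ => ?_
  rw [map_smul, Pi.smul_apply, emb_mono n hz, smul_eq_mul]

lemma polyVec_odd (p : Polynomial ℂ) (hp : ∀ k, p.coeff (2 * k) = 0) : (polyVec p) 0 = 0 := by
  rw [polyVec, lp.coeFn_sum, Finset.sum_apply]
  refine Finset.sum_eq_zero fun n _ => ?_
  rcases Nat.even_or_odd n with h | h
  · obtain ⟨k, rfl⟩ := h
    rw [← two_mul, hp]; simp
  · have : ¬ Even n := Nat.not_even_iff_odd.mpr h
    simp [mono, v_zero, this]

lemma dense_poly :
    Dense {h : HS | ∃ p : Polynomial ℂ, ∀ z ∈ ball (0 : ℂ) 1, emb h z = p.eval z} := by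
  have h1 : (Submodule.span ℂ (Set.range v)).topologicalClosure = ⊤ := by
    rw [Submodule.topologicalClosure_eq_top_iff, Submodule.eq_bot_iff]
    intro x hx
    refine v_total x fun n => ?_
    exact (Submodule.mem_orthogonal _ _).mp hx _ (Submodule.subset_span ⟨n, rfl⟩)
  have h2 := Submodule.dense_iff_topologicalClosure_eq_top.mpr h1
  refine h2.mono fun x hx => ?_
  induction hx using Submodule.span_induction with
  | mem x hx =>
    obtain ⟨n, rfl⟩ := hx
    refine ⟨Polynomial.C ((n : ℂ) + 2) * Polynomial.X ^ n, fun z hz => ?_⟩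
    have h3 : (n : ℂ) + 2 ≠ 0 := by
      rw [show ((n : ℂ) + 2) = ((n + 2 : ℕ) : ℂ) by push_cast; ring]
      exact Nat.cast_ne_zero.mpr (by omega)
    have : v n = ((n : ℂ) + 2) • mono n := by rw [mono, smul_inv_smul₀ h3]
    rw [this, map_smul, Pi.smul_apply, emb_mono n (by simpa using hz)]
    simp
  | zero => exact ⟨0, fun z _ => by simp⟩
  | add x y _ _ hx hy =>
    obtain ⟨p, hp⟩ := hx
    obtain ⟨q, hq⟩ := hy
    exact ⟨p + q, fun z hz => by
      rw [map_add, Pi.add_apply, hp z hz, hq z hz, Polynomial.eval_add]⟩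
  | smul t x _ hx =>
    obtain ⟨p, hp⟩ := hx
    exact ⟨Polynomial.C t * p, fun z hz => by
      rw [map_smul, Pi.smul_apply, hp z hz]; simp⟩

lemma E_zero_odd (z : ℂ) (hz : z ∈ ball (0 : ℂ) 1) : emb (E 0) (-z) = -(emb (E 0) z) := by
  have hz' : ‖z‖ < 1 := by simpa using hz
  rw [emb_apply _ hz', emb_apply _ (by rwa [norm_neg]), ← tsum_neg]
  refine tsum_congr fun n => ?_
  rcases Nat.even_or_odd n with h | h
  · have : a (E 0) n = 0 := by simp [a, c, h, E_apply]
    simp [this]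
  · rw [h.neg_pow]; ring

lemma E_zero_not_mem : E 0 ∉ closure {h : HS | ∃ p : Polynomial ℂ,
    (∀ k, p.coeff (2 * k) = 0) ∧ ∀ z ∈ ball (0 : ℂ) 1, emb h z = p.eval z} := by
  intro hmem
  have hcl : IsClosed {x : HS | inner ℂ (E 0) x = 0} :=
    isClosed_eq (by fun_prop) continuous_const
  have hsub : {h : HS | ∃ p : Polynomial ℂ,
      (∀ k, p.coeff (2 * k) = 0) ∧ ∀ z ∈ ball (0 : ℂ) 1, emb h z = p.eval z} ⊆
      {x : HS | inner ℂ (E 0) x = 0} := by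
    rintro x ⟨p, hp, hx⟩
    have : x = polyVec p := emb_inj _ _ fun z hz => by
      rw [hx z hz, emb_polyVec p (by simpa using hz)]
    change inner ℂ (E 0) x = 0
    rw [E_inner, this, polyVec_odd p hp]
  have := closure_minimal hsub hcl hmem
  change inner ℂ (E 0) (E 0) = 0 at this
  rw [E_inner, E_apply] at this
  simp at this

lemma emb_compact (K : Set ℂ) (hK : IsCompact K) (hsub : K ⊆ ball (0 : ℂ) 1) :
    ∃ C : ℝ, ∀ h : HS, ∀ z ∈ K, ‖emb h z‖ ≤ C * ‖h‖ := by
  rcases K.eq_empty_or_nonempty with rfl | hne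
  · exact ⟨0, by simp⟩
  obtain ⟨w, hw, hmax⟩ := hK.exists_isMaxOn hne continuous_norm.continuousOn
  have hw1 : ‖w‖ < 1 := by simpa using hsub hw
  refine ⟨∑' n : ℕ, (((n : ℝ) + 2) * (n + 3)) * ‖w‖ ^ n, fun h z hz => ?_⟩
  rw [emb_apply h (by simpa using hsub hz), mul_comm]
  exact tsum_of_norm_bounded ((geo_summable (norm_nonneg w) hw1).hasSum.mul_left ‖h‖)
    (term_bound h (hmax hz))

end OddPoly

/-- There is a Hilbert holomorphic function space on the unit disk containing the polynomials
densely, in which the odd polynomials are not dense in the odd functions; moreover the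
monomial norms can be made to satisfy `‖zⁿ‖ ≤ 1 + ωₙ` whenever `Σ 1/ωₙ < ∞`. -/
theorem stmt14 (ω : ℕ → ℝ) (hω : ∀ n, 0 < ω n) (hsum : Summable fun n => 1 / ω n) :
    ∃ (H : Type) (_ : NormedAddCommGroup H) (_ : InnerProductSpace ℂ H) (_ : CompleteSpace H)
      (ι : H →ₗ[ℂ] (ℂ → ℂ)),
      -- H consists of holomorphic functions on the disk
      (∀ h : H, DifferentiableOn ℂ (ι h) (ball (0 : ℂ) 1)) ∧
      -- the embedding is injective (as functions on the disk)
      (∀ h₁ h₂ : H, (∀ z ∈ ball (0 : ℂ) 1, ι h₁ z = ι h₂ z) → h₁ = h₂) ∧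
      -- the inclusion into Hol(𝔻) is continuous (uniform bounds on compact subsets)
      (∀ K : Set ℂ, IsCompact K → K ⊆ ball (0 : ℂ) 1 →
        ∃ C : ℝ, ∀ h : H, ∀ z ∈ K, ‖ι h z‖ ≤ C * ‖h‖) ∧
      -- H contains the polynomials
      (∀ p : Polynomial ℂ, ∃ h : H, ∀ z ∈ ball (0 : ℂ) 1, ι h z = p.eval z) ∧
      -- the polynomials are dense in H
      Dense {h : H | ∃ p : Polynomial ℂ, ∀ z ∈ ball (0 : ℂ) 1, ι h z = p.eval z} ∧
      -- the odd polynomials are not dense in the odd functions of H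
      (∃ f : H, (∀ z ∈ ball (0 : ℂ) 1, ι f (-z) = -(ι f z)) ∧
        f ∉ closure {h : H | ∃ p : Polynomial ℂ,
          (∀ k, p.coeff (2 * k) = 0) ∧ ∀ z ∈ ball (0 : ℂ) 1, ι h z = p.eval z}) ∧
      -- the monomial norm estimates
      (∀ n : ℕ, ∃ h : H, (∀ z ∈ ball (0 : ℂ) 1, ι h z = z ^ n) ∧ ‖h‖ ≤ 1 + ω n) := by
  refine ⟨OddPoly.HS, inferInstance, inferInstance, inferInstance, OddPoly.emb,
    fun h => ?_, OddPoly.emb_inj, OddPoly.emb_compact, fun p => ?_, OddPoly.dense_poly,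
    ⟨OddPoly.E 0, OddPoly.E_zero_odd, OddPoly.E_zero_not_mem⟩, fun n => ?_⟩
  · have := (OddPoly.emb_series h).differentiableOn
    refine this.mono fun z hz => ?_
    have hz' : ‖z‖ < 1 := by simpa using hz
    simpa [Metric.mem_eball, edist_zero_right, ← ofReal_norm, ENNReal.ofReal_lt_one] using hz'
  · exact ⟨OddPoly.polyVec p, fun z hz => OddPoly.emb_polyVec p (by simpa using hz)⟩
  · refine ⟨OddPoly.mono n, fun z hz => OddPoly.emb_mono n (by simpa using hz), ?_⟩
    linarith [OddPoly.mono_norm n, hω n]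
end

section
/- There exists a Hilbert holomorphic function space H on the unit disk in which the polynomials are dense, and a function f ∈ H, such that f does not lie in the closed linear span of its radial dilates {f_r : 0 < r < 1}, where f_r(z) := f(rz). -/
open Metric

namespace Stmt16Aux

/-- The power series with coefficients `a`. -/
noncomputable def G (a : ℕ → ℂ) (s : ℂ) : ℂ := ∑' n, a n * s ^ n

lemma summ {a : ℕ → ℂ} {C : ℝ} (ha : ∀ n, ‖a n‖ ≤ C) {s : ℂ} (hs : ‖s‖ < 1) :
    Summable (fun n => a n * s ^ n) := by
  refine Summable.of_norm_bounded (g := fun n => C * ‖s‖ ^ n)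
    ((summable_geometric_of_lt_one (norm_nonneg _) hs).mul_left C) fun n => ?_
  rw [norm_mul, norm_pow]
  gcongr
  exact ha n

lemma G_bound {a : ℕ → ℂ} {C : ℝ} (ha : ∀ n, ‖a n‖ ≤ C) {s : ℂ} (hs : ‖s‖ < 1) :
    ‖G a s‖ ≤ C * (1 - ‖s‖)⁻¹ := by
  refine tsum_of_norm_bounded
    ((hasSum_geometric_of_lt_one (norm_nonneg _) hs).mul_left C) fun n => ?_
  rw [norm_mul, norm_pow]
  gcongr
  exact ha n

lemma G_series {a : ℕ → ℂ} {C : ℝ} (ha : ∀ n, ‖a n‖ ≤ C) :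
    HasFPowerSeriesOnBall (G a) (FormalMultilinearSeries.ofScalars ℂ a) 0 1 := by
  have hr : (1 : ENNReal) ≤ (FormalMultilinearSeries.ofScalars ℂ a).radius := by
    have := FormalMultilinearSeries.le_radius_of_bound (r := 1)
      (FormalMultilinearSeries.ofScalars ℂ a) C (fun n => by
        rw [FormalMultilinearSeries.ofScalars_norm]
        simpa using ha n)
    simpa using this
  have h := ((FormalMultilinearSeries.ofScalars ℂ a).hasFPowerSeriesOnBall
    (lt_of_lt_of_le one_pos hr)).mono one_pos hr
  have e : (FormalMultilinearSeries.ofScalars ℂ a).sum = G a := by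
    funext s
    simp [FormalMultilinearSeries.sum, G, mul_comm]
  rwa [e] at h

lemma G_diff {a : ℕ → ℂ} {C : ℝ} (ha : ∀ n, ‖a n‖ ≤ C) :
    DifferentiableOn ℂ (G a) (ball 0 1) := by
  have h := (G_series ha).differentiableOn
  have e : Metric.eball (0 : ℂ) 1 = ball 0 1 := by
    rw [← ENNReal.ofReal_one, Metric.eball_ofReal]
  rwa [e] at h

lemma G_zero {a : ℕ → ℂ} {C : ℝ} (ha : ∀ n, ‖a n‖ ≤ C)
    (h0 : ∀ s : ℂ, ‖s‖ < 1 → s ≠ 0 → G a s = 0) : ∀ n, a n = 0 := by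
  have hs := (G_series ha).hasFPowerSeriesAt
  have hev : ∀ᶠ s in nhds (0 : ℂ), G a s = 0 := by
    rcases hs.analyticAt.eventually_eq_zero_or_eventually_ne_zero with h | h
    · exact h
    · exfalso
      have h2 : ∀ᶠ s in nhdsWithin (0 : ℂ) {0}ᶜ, G a s = 0 := by
        have : ∀ᶠ s in nhdsWithin (0 : ℂ) {0}ᶜ, s ∈ ball (0 : ℂ) 1 :=
          nhdsWithin_le_nhds (ball_mem_nhds _ one_pos)
        filter_upwards [this, self_mem_nhdsWithin] with s h1 h2
        exact h0 s (by simpa using h1) h2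
      obtain ⟨s, h3, h4⟩ := (h.and h2).exists
      exact h3 h4
  have hz := (hs.congr hev).eq_zero
  intro n
  have := congrArg (fun p => FormalMultilinearSeries.coeff p n) hz
  have e0 : FormalMultilinearSeries.coeff (0 : FormalMultilinearSeries ℂ ℂ ℂ) n = 0 := rfl
  simpa only [FormalMultilinearSeries.coeff_ofScalars, e0] using this

abbrev H : Type := lp (fun _ : ℕ => ℂ) 2

lemma two_ne : (2 : ENNReal) ≠ 0 := by norm_num

lemma hb (h : H) (n : ℕ) : ‖h n‖ ≤ ‖h‖ := lp.norm_apply_le_norm two_ne h n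

lemma sq_lt {z : ℂ} (hz : z ∈ ball (0 : ℂ) 1) : ‖z ^ 2‖ < 1 := by
  have : ‖z‖ < 1 := by simpa using hz
  rw [norm_pow]
  exact pow_lt_one₀ (norm_nonneg _) this two_ne_zero

lemma one_sub_ne {s : ℂ} (hs : ‖s‖ < 1) : 1 - s ≠ 0 := by
  intro h
  have : s = 1 := (sub_eq_zero.mp h).symm
  rw [this] at hs
  simp at hs

/-- coordinates: `0 ↦ g`, `2n+1 ↦ u n`, `2n+2 ↦ v n`. -/
noncomputable def F (h : H) (z : ℂ) : ℂ :=
  G (fun n => h (2 * n + 1)) (z ^ 2) + h 0 * (1 - z ^ 2)⁻¹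
    + (z - z ^ 2 * (1 - z ^ 2)⁻¹) * G (fun n => h (2 * n + 2)) (z ^ 2)

open Classical in
noncomputable def iota : H →ₗ[ℂ] (ℂ → ℂ) where
  toFun h z := if z ∈ ball (0 : ℂ) 1 then F h z else 0
  map_add' h k := by
    funext z
    by_cases hz : z ∈ ball (0 : ℂ) 1
    · have e1 : ∀ (φ : ℕ → ℕ), G (fun n => (h + k) (φ n)) (z ^ 2) =
          G (fun n => h (φ n)) (z ^ 2) + G (fun n => k (φ n)) (z ^ 2) := by
        intro φ
        unfold G
        rw [← (summ (fun n => hb h (φ n)) (sq_lt hz)).tsum_add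
          (summ (fun n => hb k (φ n)) (sq_lt hz))]
        congr 1; funext n
        simp [add_mul]
      simp only [Pi.add_apply, if_pos hz, F]
      rw [e1 (fun n => 2 * n + 1), e1 (fun n => 2 * n + 2)]
      simp only [lp.coeFn_add, Pi.add_apply]
      ring
    · simp only [if_neg hz, Pi.add_apply, Pi.smul_apply, add_zero, smul_zero]
  map_smul' c h := by
    funext z
    by_cases hz : z ∈ ball (0 : ℂ) 1
    · have e1 : ∀ (φ : ℕ → ℕ), G (fun n => (c • h) (φ n)) (z ^ 2) =
          c * G (fun n => h (φ n)) (z ^ 2) := by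
        intro φ
        unfold G
        rw [← tsum_mul_left]
        congr 1; funext n
        simp [mul_assoc]
      simp only [Pi.smul_apply, if_pos hz, F]
      rw [e1 (fun n => 2 * n + 1), e1 (fun n => 2 * n + 2)]
      simp only [lp.coeFn_smul, Pi.smul_apply, smul_eq_mul, RingHom.id_apply]
      ring
    · simp only [if_neg hz, Pi.add_apply, Pi.smul_apply, add_zero, smul_zero]

lemma iota_eq (h : H) {z : ℂ} (hz : z ∈ ball (0 : ℂ) 1) : iota h z = F h z := if_pos hz

lemma iota_diff (h : H) : DifferentiableOn ℂ (iota h) (ball (0 : ℂ) 1) := by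
  have hF : DifferentiableOn ℂ (F h) (ball (0 : ℂ) 1) := by
    have hg : ∀ φ : ℕ → ℕ, DifferentiableOn ℂ (fun z => G (fun n => h (φ n)) (z ^ 2))
        (ball (0 : ℂ) 1) := fun φ =>
      (G_diff (fun n => hb h (φ n))).comp (g := G (fun n => h (φ n))) (f := fun z : ℂ => z ^ 2)
        (by fun_prop) (fun z hz => by simpa using sq_lt hz)
    have hi : DifferentiableOn ℂ (fun z : ℂ => (1 - z ^ 2)⁻¹) (ball (0 : ℂ) 1) :=
      DifferentiableOn.inv (by fun_prop) (fun z hz => one_sub_ne (sq_lt hz))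
    have h1 := hg (fun n => 2 * n + 1)
    have h2 := hg (fun n => 2 * n + 2)
    unfold F
    exact (h1.add (hi.const_mul _)).add
      ((differentiableOn_id.sub ((by fun_prop : DifferentiableOn ℂ (fun z : ℂ => z ^ 2) _).mul hi)).mul h2)
  exact hF.congr fun z hz => iota_eq h hz

lemma G_const {c s : ℂ} (hs : ‖s‖ < 1) : G (fun _ => c) s = c * (1 - s)⁻¹ := by
  unfold G
  rw [tsum_mul_left, tsum_geometric_of_norm_lt_one hs]

lemma tail_zero (h : H) (c : ℂ) (φ : ℕ → ℕ) (hφ : Function.Injective φ)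
    (hc : ∀ n, h (φ n) = c) : c = 0 := by
  have h2 : Summable fun i => ‖h i‖ ^ (2 : ENNReal).toReal :=
    (lp.memℓp h).summable (by norm_num)
  have h3 := (h2.comp_injective hφ)
  have h4 : Summable fun _ : ℕ => ‖c‖ ^ (2 : ENNReal).toReal := by
    refine h3.congr fun n => ?_
    simp [hc]
  have := tendsto_nhds_unique h4.tendsto_atTop_zero tendsto_const_nhds
  simpa using this.symm

lemma iota_inj (h : H) (h0 : ∀ z ∈ ball (0 : ℂ) 1, iota h z = 0) : h = 0 := by
  have hF : ∀ z : ℂ, ‖z‖ < 1 → F h z = 0 := fun z hz => by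
    have hz : z ∈ ball (0 : ℂ) 1 := by simpa using hz
    rw [← iota_eq h hz, h0 z hz]
  have root : ∀ s : ℂ, ‖s‖ < 1 → ∃ z : ℂ, z ^ 2 = s ∧ ‖z‖ < 1 := by
    intro s hs
    obtain ⟨z, hz⟩ := IsAlgClosed.exists_pow_nat_eq s two_pos
    refine ⟨z, hz, ?_⟩
    by_contra hcon
    rw [← hz, norm_pow] at hs
    nlinarith
  have hv : ∀ n, h (2 * n + 2) = 0 := by
    refine G_zero (fun n => hb h (2 * n + 2)) fun s hs hs0 => ?_
    obtain ⟨z, rfl, hz⟩ := root s hs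
    have h1 := hF z hz
    have h2 := hF (-z) (by simpa using hz)
    have hz0 : z ≠ 0 := by rintro rfl; simp at hs0
    unfold F at h1 h2
    rw [neg_sq] at h2
    have h3 : (2 * z) * G (fun n => h (2 * n + 2)) (z ^ 2) = 0 := by linear_combination h1 - h2
    exact (mul_eq_zero.mp h3).resolve_left (by simpa using hz0)
  have hu : ∀ n, h (2 * n + 1) + h 0 = 0 := by
    refine G_zero (a := fun n => h (2 * n + 1) + h 0) (C := ‖h‖ + ‖h‖)
      (fun n => (norm_add_le _ _).trans (add_le_add (hb h _) (hb h _))) fun s hs hs0 => ?_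
    obtain ⟨z, rfl, hz⟩ := root s hs
    have h1 := hF z hz
    have e : G (fun n => h (2 * n + 1) + h 0) (z ^ 2)
        = G (fun n => h (2 * n + 1)) (z ^ 2) + G (fun _ => h 0) (z ^ 2) := by
      unfold G
      rw [← (summ (fun n => hb h (2 * n + 1)) hs).tsum_add
        (summ (fun _ => hb h 0) hs)]
      congr 1; funext n; ring
    have e2 : G (fun n => h (2 * n + 2)) (z ^ 2) = 0 := by simp [G, hv]
    rw [e, G_const hs]
    unfold F at h1
    rw [e2] at h1
    simpa using h1
  have hg : h 0 = 0 := by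
    have := tail_zero h (-h 0) (fun n => 2 * n + 1) (fun a b hab => by simpa using hab)
      (fun n => eq_neg_of_add_eq_zero_left (hu n))
    simpa using this
  ext k
  rcases Nat.even_or_odd' k with ⟨n, rfl | rfl⟩
  · cases n with
    | zero => simpa using hg
    | succ n => simpa [mul_add] using hv n
  · simpa [hg] using hu n

lemma iota_bound (K : Set ℂ) (hK : IsCompact K) (hsub : K ⊆ ball (0 : ℂ) 1) :
    ∃ C : ℝ, ∀ h : H, ∀ z ∈ K, ‖iota h z‖ ≤ C * ‖h‖ := by
  let M : ℂ → ℝ := fun z => (1 - ‖z ^ 2‖)⁻¹ + ‖(1 - z ^ 2)⁻¹‖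
    + ‖z - z ^ 2 * (1 - z ^ 2)⁻¹‖ * (1 - ‖z ^ 2‖)⁻¹
  have hM : ContinuousOn M K := by
    have hi : ContinuousOn (fun z : ℂ => (1 - z ^ 2)⁻¹) K :=
      ContinuousOn.inv₀ (by fun_prop) (fun z hz => one_sub_ne (sq_lt (hsub hz)))
    have hj : ContinuousOn (fun z : ℂ => (1 - ‖z ^ 2‖)⁻¹) K :=
      ContinuousOn.inv₀ (by fun_prop) (fun z hz => (sub_pos.mpr (sq_lt (hsub hz))).ne')
    exact (hj.add hi.norm).add
      ((continuousOn_id.sub ((by fun_prop : ContinuousOn (fun z : ℂ => z ^ 2) _).mul hi)).norm.mul hj)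
  obtain ⟨C, hC⟩ := hK.exists_bound_of_continuousOn hM
  refine ⟨C, fun h z hz => ?_⟩
  have hs := sq_lt (hsub hz)
  have h1 : ‖F h z‖ ≤ M z * ‖h‖ := by
    have b1 := G_bound (fun n => hb h (2 * n + 1)) hs
    have b2 := G_bound (fun n => hb h (2 * n + 2)) hs
    have b0 := hb h 0
    calc ‖F h z‖ ≤ _ := norm_add₃_le
      _ ≤ ‖h‖ * (1 - ‖z ^ 2‖)⁻¹ + ‖h‖ * ‖(1 - z ^ 2)⁻¹‖
          + ‖z - z ^ 2 * (1 - z ^ 2)⁻¹‖ * (‖h‖ * (1 - ‖z ^ 2‖)⁻¹) := by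
        rw [norm_mul, norm_mul]
        gcongr
      _ = M z * ‖h‖ := by simp only [M]; ring
  rw [iota_eq h (hsub hz)]
  refine h1.trans ?_
  gcongr
  exact (le_abs_self _).trans (hC z hz)

noncomputable def e (k : ℕ) : H := lp.single 2 k (1 : ℂ)

lemma e_apply (k j : ℕ) : (e k) j = if j = k then 1 else 0 := by
  simp [e, lp.single_apply, Pi.single_apply]

lemma e_inner (k : ℕ) (h : H) : inner ℂ (e k) h = h k := by
  simp [e, lp.inner_single_left]

lemma G_single (m : ℕ) (s : ℂ) (a : ℕ → ℂ) (ha : ∀ n, a n = if n = m then 1 else 0) :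
    G a s = s ^ m := by
  unfold G
  rw [tsum_eq_single m]
  · simp [ha]
  · intro n hn; simp [ha, hn]

lemma G_null (s : ℂ) (a : ℕ → ℂ) (ha : ∀ n, a n = 0) : G a s = 0 := by
  simp [G, ha]

lemma F_g (z : ℂ) : F (e 0) z = (1 - z ^ 2)⁻¹ := by
  unfold F
  rw [G_null _ _ (fun n => by simp [e_apply]), G_null _ _ (fun n => by simp [e_apply])]
  simp [e_apply]

lemma F_u (m : ℕ) (z : ℂ) : F (e (2 * m + 1)) z = z ^ (2 * m) := by
  unfold F
  rw [G_single m _ _ (fun n => by simp [e_apply]),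
    G_null _ _ (fun n => by rw [e_apply, if_neg (by omega)])]
  simp [e_apply, pow_mul]

lemma F_v (m : ℕ) (z : ℂ) :
    F (e (2 * m + 2)) z = (z - z ^ 2 * (1 - z ^ 2)⁻¹) * z ^ (2 * m) := by
  unfold F
  rw [G_single m (a := fun n => (e (2 * m + 2)) (2 * n + 2)) _ (fun n => by simp [e_apply]),
    G_null _ _ (fun n => by rw [e_apply, if_neg (by omega)])]
  simp [e_apply, pow_mul]

noncomputable def odd (m : ℕ) : H :=
  e (2 * m + 2) + e 0 - ∑ n ∈ Finset.range (m + 1), e (2 * n + 1)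

lemma iota_odd (m : ℕ) {z : ℂ} (hz : z ∈ ball (0 : ℂ) 1) :
    iota (odd m) z = z ^ (2 * m + 1) := by
  have hne := one_sub_ne (sq_lt hz)
  have hg : (∑ n ∈ Finset.range (m + 1), (z ^ 2) ^ n) * (1 - z ^ 2) = 1 - (z ^ 2) ^ (m + 1) :=
    geom_sum_mul_neg _ _
  simp only [odd, map_sub, map_add, map_sum, Pi.sub_apply, Pi.add_apply, Finset.sum_apply]
  simp only [iota_eq _ hz, F_g, F_u, F_v, pow_mul]
  rw [eq_div_of_mul_eq hne hg]
  field_simp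
  ring

/-- Elements of `H` representing polynomials. -/
def P : Submodule ℂ H where
  carrier := {h : H | ∃ p : Polynomial ℂ, ∀ z ∈ ball (0 : ℂ) 1, iota h z = p.eval z}
  add_mem' := by
    rintro a b ⟨p, hp⟩ ⟨q, hq⟩
    exact ⟨p + q, fun z hz => by simp [hp z hz, hq z hz]⟩
  zero_mem' := ⟨0, fun z hz => by simp⟩
  smul_mem' := by
    rintro c a ⟨p, hp⟩
    exact ⟨c • p, fun z hz => by simp [hp z hz]⟩

lemma poly_exists (p : Polynomial ℂ) : ∃ h : H, ∀ z ∈ ball (0 : ℂ) 1, iota h z = p.eval z := by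
  induction p using Polynomial.induction_on' with
  | add p q hp hq =>
    obtain ⟨a, ha⟩ := hp
    obtain ⟨b, hb⟩ := hq
    exact ⟨a + b, fun z hz => by simp [ha z hz, hb z hz]⟩
  | monomial k c =>
    rcases Nat.even_or_odd' k with ⟨n, rfl | rfl⟩
    · exact ⟨c • e (2 * n + 1), fun z hz => by
        rw [map_smul, Pi.smul_apply, iota_eq _ hz, F_u]; simp⟩
    · exact ⟨c • odd n, fun z hz => by simp [iota_odd n hz]⟩

lemma u_mem (m : ℕ) : e (2 * m + 1) ∈ P :=
  ⟨Polynomial.X ^ (2 * m), fun z hz => by simp [iota_eq _ hz, F_u]⟩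

lemma odd_mem (m : ℕ) : odd m ∈ P :=
  ⟨Polynomial.X ^ (2 * m + 1), fun z hz => by simp [iota_odd m hz]⟩

lemma P_dense : Dense (P : Set H) := by
  rw [Submodule.dense_iff_topologicalClosure_eq_top, Submodule.topologicalClosure_eq_top_iff,
    Submodule.eq_bot_iff]
  intro h hh
  have hu : ∀ m, h (2 * m + 1) = 0 := fun m => by
    rw [← e_inner]; exact hh _ (u_mem m)
  have hv : ∀ m, h (2 * m + 2) + h 0 = 0 := fun m => by
    have : inner ℂ (odd m) h = 0 := hh _ (odd_mem m)
    simpa [odd, inner_sub_left, inner_add_left, sum_inner, e_inner, hu] using this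
  have hg : h 0 = 0 := by
    have := tail_zero h (-h 0) (fun n => 2 * n + 2) (fun a b hab => by simpa using hab)
      (fun n => eq_neg_of_add_eq_zero_left (hv n))
    simpa using this
  ext k
  rcases Nat.even_or_odd' k with ⟨n, rfl | rfl⟩
  · cases n with
    | zero => simpa using hg
    | succ n => simpa [mul_add, hg] using hv n
  · simpa using hu n

/-- Coefficients of the dilate. -/
noncomputable def dc (r : ℝ) (k : ℕ) : ℂ := if Odd k then (r : ℂ) ^ (k - 1) else 0

lemma dc_mem {r : ℝ} (h0 : 0 < r) (h1 : r < 1) : Memℓp (dc r) 2 := by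
  refine memℓp_gen ?_
  rw [← summable_nat_add_iff 1]
  refine Summable.of_nonneg_of_le (fun k => by positivity) (fun k => ?_)
    (summable_geometric_of_lt_one (sq_nonneg r) (by nlinarith : r ^ 2 < 1))
  have : ‖dc r (k + 1)‖ ≤ r ^ k := by
    unfold dc
    split_ifs
    · simp [abs_of_pos h0]
    · simp; positivity
  have h2 : ‖dc r (k + 1)‖ ^ (2 : ENNReal).toReal = ‖dc r (k + 1)‖ ^ 2 := by
    simp
  rw [h2, ← pow_mul, mul_comm 2 k, pow_mul]
  gcongr

open Classical in
noncomputable def dil (r : ℝ) : H := if h : Memℓp (dc r) 2 then ⟨dc r, h⟩ else 0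

lemma dil_apply {r : ℝ} (h0 : 0 < r) (h1 : r < 1) (k : ℕ) : dil r k = dc r k := by
  rw [dil, dif_pos (dc_mem h0 h1)]

end Stmt16Aux

open Stmt16Aux in
/-- There exist a Hilbert holomorphic function space `H` on the unit disk in which the
polynomials are dense, and an `f ∈ H` lying outside the closed linear span of its radial
dilates `f_r(z) := f(rz)`, `0 < r < 1`. -/
theorem stmt16 :
    ∃ (H : Type) (_ : NormedAddCommGroup H) (_ : InnerProductSpace ℂ H) (_ : CompleteSpace H)
      (ι : H →ₗ[ℂ] (ℂ → ℂ)),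
      (∀ h : H, DifferentiableOn ℂ (ι h) (ball (0 : ℂ) 1)) ∧
      (∀ h₁ h₂ : H, (∀ z ∈ ball (0 : ℂ) 1, ι h₁ z = ι h₂ z) → h₁ = h₂) ∧
      (∀ K : Set ℂ, IsCompact K → K ⊆ ball (0 : ℂ) 1 →
        ∃ C : ℝ, ∀ h : H, ∀ z ∈ K, ‖ι h z‖ ≤ C * ‖h‖) ∧
      (∀ p : Polynomial ℂ, ∃ h : H, ∀ z ∈ ball (0 : ℂ) 1, ι h z = p.eval z) ∧
      Dense {h : H | ∃ p : Polynomial ℂ, ∀ z ∈ ball (0 : ℂ) 1, ι h z = p.eval z} ∧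
      ∃ (f : H) (dil : ℝ → H),
        -- `dil r` is the radial dilate `f_r` of `f`, as an element of `H`
        (∀ r : ℝ, 0 < r → r < 1 →
          ∀ z ∈ ball (0 : ℂ) 1, ι (dil r) z = ι f ((r : ℂ) * z)) ∧
        -- `f` is outside the closed linear span of its radial dilates
        f ∉ (Submodule.span ℂ (dil '' Set.Ioo (0 : ℝ) 1)).topologicalClosure := by
  refine ⟨H, inferInstance, inferInstance, inferInstance, iota, iota_diff, ?_, iota_bound,
    poly_exists, P_dense, e 0, dil, ?_, ?_⟩
  · intro h₁ h₂ h
    refine sub_eq_zero.mp (iota_inj _ fun z hz => ?_)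
    simp [h z hz]
  · intro r h0 h1 z hz
    have hrz : (r : ℂ) * z ∈ ball (0 : ℂ) 1 := by
      have : ‖z‖ < 1 := by simpa using hz
      simp only [mem_ball_zero_iff, norm_mul, Complex.norm_real, Real.norm_eq_abs, abs_of_pos h0]
      nlinarith [norm_nonneg z]
    rw [iota_eq _ hz, iota_eq _ hrz, F_g]
    have e1 : G (fun n => dil r (2 * n + 1)) (z ^ 2) = (1 - ((r : ℂ) * z) ^ 2)⁻¹ := by
      rw [← tsum_geometric_of_norm_lt_one (sq_lt hrz)]
      unfold G
      congr 1; funext n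
      beta_reduce
      rw [dil_apply h0 h1, dc, if_pos (odd_two_mul_add_one n)]
      simp only [Nat.add_sub_cancel]
      rw [mul_pow, mul_pow, pow_mul]
    have e2 : G (fun n => dil r (2 * n + 2)) (z ^ 2) = 0 := by
      refine G_null _ _ fun n => ?_
      rw [dil_apply h0 h1, dc, if_neg]
      rw [Nat.not_odd_iff_even]
      exact ⟨n + 1, by ring⟩
    have e3 : dil r 0 = 0 := by
      rw [dil_apply h0 h1, dc, if_neg (by simp)]
    unfold F
    rw [e1, e2, e3]
    simp
  · intro hmem
    have hle : (Submodule.span ℂ (dil '' Set.Ioo (0 : ℝ) 1)).topologicalClosure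
        ≤ (Submodule.span ℂ {e 0})ᗮ := by
      refine Submodule.topologicalClosure_minimal _ (Submodule.span_le.mpr ?_)
        (Submodule.isClosed_orthogonal _)
      rintro _ ⟨r, ⟨h0, h1⟩, rfl⟩
      rw [SetLike.mem_coe, Submodule.mem_orthogonal_singleton_iff_inner_right, e_inner,
        dil_apply h0 h1, dc, if_neg (by simp)]
    have h2 := hle hmem
    rw [Submodule.mem_orthogonal_singleton_iff_inner_right, e_inner, e_apply] at h2
    simp at h2
end
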